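/- Let ϑ₁, ϑ₂, ϑ₃ be Beurling weights on ℝ^d and 1 < p, q, r < ∞. Assume ϑ₃ ≺ ϑ₁ and that ϑ₃(x)/ϑ₁(x) does not tend to zero as |x| → ∞. Then A^{p,1,q,r}_{ϑ₁,ϑ₂}(ℝ^d) ⊆ A^{p,1,q,r}_{ϑ₃,ϑ₂}(ℝ^d) and the inclusion map i : A^{p,1,q,r}_{ϑ₁,ϑ₂}(ℝ^d) → A^{p,1,q,r}_{ϑ₃,ϑ₂}(ℝ^d) is never a compact operator: there exists a sequence bounded in ‖·‖_{A_{ϑ₁,ϑ₂}} with no subsequence converging in the norm ‖·‖_{A_{ϑ₃,ϑ₂}}. -/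

import Mathlib

open MeasureTheory Filter Topology
open scoped ENNReal NNReal BigOperators

noncomputable section

/-- The unit cube `α + [0,1)^d` at the integer point `α ∈ ℤ^d`. -/
def cube {d : ℕ} (α : Fin d → ℤ) : Set (Fin d → ℝ) :=
  Set.univ.pi fun i => Set.Ico (α i : ℝ) ((α i : ℝ) + 1)

/-- The weighted amalgam norm `‖f‖_{pq,ω}` of the space `(L^p_ω, ℓ^q)`. -/
def amalgamNorm {d : ℕ} (p q : ℝ) (ω : (Fin d → ℝ) → ℝ) (f : (Fin d → ℝ) → ℂ) : ℝ≥0∞ :=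
  (∑' α : Fin d → ℤ,
      (eLpNorm (fun x => ω x • f x) (ENNReal.ofReal p) (volume.restrict (cube α))) ^ q) ^ (1 / q)

/-- Membership in the weighted amalgam space `(L^p_ω, ℓ^q)`. -/
def MemAmalgam {d : ℕ} (p q : ℝ) (ω : (Fin d → ℝ) → ℝ) (f : (Fin d → ℝ) → ℂ) : Prop :=
  Measurable f ∧ amalgamNorm p q ω f < ⊤

/-- A Beurling weight: measurable, `ϑ ≥ 1` and submultiplicative. -/
def IsBeurling {d : ℕ} (ϑ : (Fin d → ℝ) → ℝ) : Prop :=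
  Measurable ϑ ∧ (∀ x, 1 ≤ ϑ x) ∧ ∀ x y, ϑ (x + y) ≤ ϑ x * ϑ y

/-- The Fourier transform `f̂(ξ) = ∫ f(x) e^{-2πi⟨x,ξ⟩} dx`. -/
def fourierT {d : ℕ} (f : (Fin d → ℝ) → ℂ) (ξ : Fin d → ℝ) : ℂ :=
  ∫ x : Fin d → ℝ,
    Complex.exp (-(2 * (Real.pi : ℂ) * Complex.I * ∑ i, (x i : ℂ) * (ξ i : ℂ))) * f x

/-- The norm of `A^{p,1,q,r}_{ϑ₁,ϑ₂}(ℝ^d)`. -/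
def ANorm {d : ℕ} (p q r : ℝ) (ϑ₁ ϑ₂ : (Fin d → ℝ) → ℝ) (f : (Fin d → ℝ) → ℂ) : ℝ≥0∞ :=
  amalgamNorm p 1 ϑ₁ f + amalgamNorm q r ϑ₂ (fourierT f)

/-- Membership in `A^{p,1,q,r}_{ϑ₁,ϑ₂}(ℝ^d)`. -/
def MemA {d : ℕ} (p q r : ℝ) (ϑ₁ ϑ₂ : (Fin d → ℝ) → ℝ) (f : (Fin d → ℝ) → ℂ) : Prop :=
  MemAmalgam p 1 ϑ₁ f ∧ MemAmalgam q r ϑ₂ (fourierT f)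

/-- Convolution `(f∗g)(x) = ∫ f(x−t)g(t) dt`. -/
def convF {d : ℕ} (f g : (Fin d → ℝ) → ℂ) (x : Fin d → ℝ) : ℂ :=
  ∫ t : Fin d → ℝ, f (x - t) * g t

/-- `ϑ ≺ ϑ'` : domination of weights up to a constant. -/
def Prec {d : ℕ} (ϑ ϑ' : (Fin d → ℝ) → ℝ) : Prop :=
  ∃ C : ℝ, 0 < C ∧ ∀ x, ϑ x ≤ C * ϑ' x

/-- The Beurling–Domar condition `∑_{n≥1} log ϑ(nx)/n² < ∞`. -/
def BeurlingDomar {d : ℕ} (ϑ : (Fin d → ℝ) → ℝ) : Prop :=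
  ∀ x : Fin d → ℝ, Summable fun n : ℕ => Real.log (ϑ ((n : ℝ) • x)) / (n : ℝ) ^ 2

/-- `w` does not tend to zero as `|x| → ∞`. -/
def NotVanishingAtInfty {d : ℕ} (w : (Fin d → ℝ) → ℝ) : Prop :=
  ∃ δ : ℝ, 0 < δ ∧ ∀ R : ℝ, 0 < R → ∃ x : Fin d → ℝ, R < ‖x‖ ∧ δ ≤ w x

end

namespace AInclAux

lemma tsum_pi_prod (g : ℤ → ℝ≥0∞) (d : ℕ) :
    ∑' α : Fin d → ℤ, ∏ i, g (α i) = (∑' n, g n) ^ d := by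
  induction d with
  | zero => simp
  | succ d ih =>
    rw [← (Fin.consEquiv (fun _ : Fin (d + 1) => ℤ)).tsum_eq]
    rw [ENNReal.tsum_prod']
    simp only [Fin.consEquiv_apply, Fin.prod_univ_succ, Fin.cons_zero, Fin.cons_succ]
    simp_rw [ENNReal.tsum_mul_left, ENNReal.tsum_mul_right]
    rw [ih, pow_succ, mul_comm]

lemma tsum_exp_lt_top (c : ℝ) (hc : 0 < c) :
    ∑' n : ℤ, ENNReal.ofReal (Real.exp (-(c * |(n : ℝ)|))) < ⊤ := by
  have hs : Summable (fun n : ℤ => Real.exp (-(c * |(n : ℝ)|))) := by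
    have h1 : Summable (fun n : ℕ => Real.exp (-(c * (n : ℝ)))) := by
      have := Real.summable_exp_nat_mul_iff.mpr (show -c < 0 by linarith)
      refine this.congr fun n => ?_
      congr 1; ring
    refine Summable.of_nat_of_neg ?_ ?_
    · simpa using h1
    · simpa using h1
  exact hs.tsum_ofReal_lt_top

lemma tsum_pi_exp_lt_top (d : ℕ) (L q : ℝ) (hL : 0 ≤ L) (hq : 0 < q) :
    ∑' β : Fin d → ℤ, (ENNReal.ofReal (L * Real.exp (-∑ i, |(β i : ℝ)|))) ^ q < ⊤ := by
  have h : ∀ β : Fin d → ℤ, (ENNReal.ofReal (L * Real.exp (-∑ i, |(β i : ℝ)|))) ^ q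
      = ENNReal.ofReal (L ^ q) * ∏ i, ENNReal.ofReal (Real.exp (-(q * |(β i : ℝ)|))) := by
    intro β
    rw [ENNReal.ofReal_rpow_of_nonneg (by positivity) hq.le,
      Real.mul_rpow hL (Real.exp_pos _).le, ENNReal.ofReal_mul (by positivity),
      ← ENNReal.ofReal_prod_of_nonneg (fun _ _ => (Real.exp_pos _).le), ← Real.exp_sum,
      ← Real.exp_mul]
    congr 3
    rw [neg_mul, Finset.sum_mul, Finset.sum_neg_distrib]
    congr 1
    exact Finset.sum_congr rfl fun i _ => mul_comm _ _
  simp_rw [h]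
  rw [ENNReal.tsum_mul_left, tsum_pi_prod (fun n : ℤ => ENNReal.ofReal (Real.exp (-(q * |(n : ℝ)|))))]
  exact ENNReal.mul_lt_top ENNReal.ofReal_lt_top (ENNReal.pow_lt_top (tsum_exp_lt_top q hq))

variable {d : ℕ}

lemma measurableSet_cube (α : Fin d → ℤ) : MeasurableSet (cube α) :=
  MeasurableSet.univ_pi fun _ => measurableSet_Ico

lemma volume_cube (α : Fin d → ℤ) : volume (cube α) = 1 := by
  simp [cube, Real.volume_pi_Ico]

lemma cube_bound (p : ℝ) (ω : (Fin d → ℝ) → ℝ) (f : (Fin d → ℝ) → ℂ)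
    (a : Fin d → ℝ) (K : ℝ) (hK : 0 ≤ K)
    (h : ∀ x, ‖ω x • f x‖ ≤ K * Real.exp (-∑ i, |x i - a i|)) (α : Fin d → ℤ) :
    eLpNorm (fun x => ω x • f x) (ENNReal.ofReal p) (volume.restrict (cube α)) ≤
      ENNReal.ofReal (K * Real.exp (2 * d) * Real.exp (-∑ i, |((α i - ⌊a i⌋ : ℤ) : ℝ)|)) := by
  have hb : ∀ᵐ x ∂(volume.restrict (cube α)), ‖ω x • f x‖ ≤
      K * Real.exp (2 * d) * Real.exp (-∑ i, |((α i - ⌊a i⌋ : ℤ) : ℝ)|) := by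
    rw [ae_restrict_iff' (measurableSet_cube α)]
    refine Eventually.of_forall fun x hx => (h x).trans ?_
    rw [mul_assoc, ← Real.exp_add]
    refine mul_le_mul_of_nonneg_left (Real.exp_le_exp.mpr ?_) hK
    have : ∑ i, |((α i - ⌊a i⌋ : ℤ) : ℝ)| ≤ ∑ i, (|x i - a i| + 2) := by
      refine Finset.sum_le_sum fun i _ => ?_
      have hx1 := hx i (Set.mem_univ i)
      have h1 := Int.floor_le (a i)
      have h2 := Int.lt_floor_add_one (a i)
      push_cast
      have h3 := abs_le.mp (le_refl |x i - a i|)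
      rw [abs_le]
      constructor <;> linarith [hx1.1, hx1.2, h3.1, h3.2]
    rw [Finset.sum_add_distrib] at this
    simp at this
    simp
    linarith
  have := eLpNorm_le_of_ae_bound (p := ENNReal.ofReal p) hb
  simpa [volume_cube] using this

/-- the uniform bound -/
noncomputable def bd (d : ℕ) (q K : ℝ) : ℝ≥0∞ :=
  (∑' β : Fin d → ℤ,
    (ENNReal.ofReal (K * Real.exp (2 * d) * Real.exp (-∑ i, |(β i : ℝ)|))) ^ q) ^ (1 / q)

lemma bd_lt_top (q K : ℝ) (hq : 0 < q) (hK : 0 ≤ K) : bd d q K < ⊤ :=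
  ENNReal.rpow_lt_top_of_nonneg (by positivity)
    (tsum_pi_exp_lt_top d _ q (by positivity) hq).ne

lemma amalgam_bound (p q : ℝ) (hq : 0 < q) (ω : (Fin d → ℝ) → ℝ) (f : (Fin d → ℝ) → ℂ)
    (a : Fin d → ℝ) (K : ℝ) (hK : 0 ≤ K)
    (h : ∀ x, ‖ω x • f x‖ ≤ K * Real.exp (-∑ i, |x i - a i|)) :
    amalgamNorm p q ω f ≤ bd d q K := by
  unfold amalgamNorm bd
  refine ENNReal.rpow_le_rpow ?_ (by positivity)
  rw [← (Equiv.subRight (fun i => ⌊a i⌋ : Fin d → ℤ)).tsum_eq (fun β : Fin d → ℤ =>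
    (ENNReal.ofReal (K * Real.exp (2 * d) * Real.exp (-∑ i, |(β i : ℝ)|))) ^ q)]
  refine ENNReal.tsum_le_tsum fun α => ENNReal.rpow_le_rpow ?_ hq.le
  simpa using cube_bound p ω f a K hK h α

lemma beurling_ball {ϑ : (Fin d → ℝ) → ℝ} (h : IsBeurling ϑ) :
    ∃ ε > 0, ∃ B : ℝ, 1 ≤ B ∧ ∀ x : Fin d → ℝ, ‖x‖ < ε → ϑ x ≤ B := by
  obtain ⟨hm, h1, hs⟩ := h
  let E : ℕ → Set (Fin d → ℝ) := fun n => {x | ϑ x ≤ n ∧ ϑ (-x) ≤ n}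
  have hE : ∀ n, MeasurableSet (E n) := fun n =>
    (measurableSet_le hm measurable_const).inter
      (measurableSet_le (hm.comp measurable_neg) measurable_const)
  have hU : (⋃ n, E n) = Set.univ := by
    refine Set.eq_univ_of_forall fun x => Set.mem_iUnion.mpr ?_
    obtain ⟨n, hn⟩ := exists_nat_ge (max (ϑ x) (ϑ (-x)))
    exact ⟨n, (le_max_left _ _).trans hn, (le_max_right _ _).trans hn⟩
  obtain ⟨n, hn⟩ : ∃ n, 0 < volume (E n) := by
    by_contra! hc
    have h0 : volume (⋃ n, E n) = 0 := measure_iUnion_null fun n => le_antisymm (hc n) bot_le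
    rw [hU] at h0
    exact (NeZero.ne (volume : Measure (Fin d → ℝ))) (Measure.measure_univ_eq_zero.mp h0)
  have hnb := Measure.sub_mem_nhds_zero_of_addHaar_pos volume (E n) (hE n) hn
  obtain ⟨ε, hε, hball⟩ := Metric.mem_nhds_iff.mp hnb
  refine ⟨ε, hε, max 1 ((n : ℝ) * n), le_max_left _ _, fun x hx => ?_⟩
  obtain ⟨u, hu, v, hv, rfl⟩ := hball (mem_ball_zero_iff.mpr hx)
  refine le_trans ?_ (le_max_right _ _)
  have := hs u (-v)
  rw [← sub_eq_add_neg] at this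
  refine this.trans (mul_le_mul hu.1 hv.2 ?_ ?_)
  · linarith [h1 (-v)]
  · positivity

lemma beurling_nsmul {ϑ : (Fin d → ℝ) → ℝ} (h : IsBeurling ϑ) (x : Fin d → ℝ) (n : ℕ) :
    ϑ ((n + 1) • x) ≤ ϑ x ^ (n + 1) := by
  induction n with
  | zero => simp
  | succ n ih =>
    rw [succ_nsmul, pow_succ]
    exact (h.2.2 _ _).trans (mul_le_mul_of_nonneg_right ih (by linarith [h.2.1 x]))

lemma beurling_exp {ϑ : (Fin d → ℝ) → ℝ} (h : IsBeurling ϑ) :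
    ∃ C A : ℝ, 0 < C ∧ 0 ≤ A ∧ ∀ x : Fin d → ℝ, ϑ x ≤ C * Real.exp (A * ∑ i, |x i|) := by
  obtain ⟨ε, hε, B, hB, hball⟩ := beurling_ball h
  have hB0 : 0 < B := by linarith
  have hl : 0 ≤ Real.log B := Real.log_nonneg hB
  refine ⟨Real.exp (Real.log B), Real.log B / ε, Real.exp_pos _, by positivity, fun x => ?_⟩
  have hx : ‖x‖ ≤ ∑ i, |x i| := by
    refine (pi_norm_le_iff_of_nonneg (by positivity)).mpr fun i => ?_
    exact Finset.single_le_sum (f := fun i => |x i|) (fun i _ => abs_nonneg _) (Finset.mem_univ i)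
  set n := ⌊‖x‖ / ε⌋₊
  have hn1 : (n : ℝ) ≤ ‖x‖ / ε := Nat.floor_le (by positivity)
  have hn2 : ‖x‖ / ε < n + 1 := Nat.lt_floor_add_one _
  have hx2 : x = (n + 1) • (((n : ℝ) + 1)⁻¹ • x) := by
    rw [← Nat.cast_smul_eq_nsmul ℝ, smul_smul]
    push_cast
    rw [mul_inv_cancel₀ (by positivity), one_smul]
  have hy : ϑ (((n : ℝ) + 1)⁻¹ • x) ≤ B := by
    apply hball
    rw [norm_smul, Real.norm_of_nonneg (by positivity), inv_mul_lt_iff₀ (by positivity)]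
    rwa [div_lt_iff₀ hε] at hn2
  have h3 := beurling_nsmul h (((n : ℝ) + 1)⁻¹ • x) n
  rw [← hx2] at h3
  refine h3.trans ((pow_le_pow_left₀ (by linarith [h.2.1 (((n : ℝ) + 1)⁻¹ • x)]) hy _).trans ?_)
  rw [← Real.exp_add, ← Real.rpow_natCast, Real.rpow_def_of_pos hB0]
  apply Real.exp_le_exp.mpr
  have h4 : (n : ℝ) ≤ (∑ i, |x i|) / ε := hn1.trans (by gcongr)
  have : Real.log B * n ≤ Real.log B * ((∑ i, |x i|) / ε) := by gcongr
  push_cast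
  calc Real.log B * ((n : ℝ) + 1) = Real.log B + Real.log B * n := by ring
    _ ≤ Real.log B + Real.log B * ((∑ i, |x i|) / ε) := by linarith
    _ = _ := by ring

lemma beurling_gauss {ϑ : (Fin d → ℝ) → ℝ} (h : IsBeurling ϑ) :
    ∃ K : ℝ, 0 ≤ K ∧ ∀ x : Fin d → ℝ,
      ϑ x * Real.exp (-(Real.pi * ∑ i, (x i) ^ 2)) ≤ K * Real.exp (-∑ i, |x i|) := by
  obtain ⟨C, A, hC, hA, hb⟩ := beurling_exp h
  refine ⟨C * Real.exp (d * (A + 1) ^ 2), by positivity, fun x => ?_⟩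
  refine (mul_le_mul_of_nonneg_right (hb x) (Real.exp_pos _).le).trans ?_
  rw [mul_assoc, mul_assoc, ← Real.exp_add, ← Real.exp_add]
  refine mul_le_mul_of_nonneg_left (Real.exp_le_exp.mpr ?_) hC.le
  have : ∑ i, (A + 1) * |x i| ≤ ∑ i, (Real.pi * (x i) ^ 2 + (A + 1) ^ 2) := by
    refine Finset.sum_le_sum fun i _ => ?_
    have hpi := Real.pi_gt_three
    rw [← sq_abs (x i)]
    nlinarith [sq_nonneg (|x i| - (A + 1)), sq_nonneg (|x i|), sq_nonneg (A + 1)]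
  rw [Finset.sum_add_distrib, ← Finset.mul_sum, ← Finset.mul_sum] at this
  simp at this
  linarith

/-- translated scaled Gaussian -/
noncomputable def gs (s : ℝ) (a : Fin d → ℝ) (x : Fin d → ℝ) : ℂ :=
  ((s * Real.exp (-(Real.pi * ∑ i, (x i - a i) ^ 2)) : ℝ) : ℂ)

lemma gs_measurable (s : ℝ) (a : Fin d → ℝ) : Measurable (gs s a) := by
  unfold gs
  refine Continuous.measurable ?_
  fun_prop

lemma gs_norm (s : ℝ) (hs : 0 ≤ s) (a x : Fin d → ℝ) :
    ‖gs s a x‖ = s * Real.exp (-(Real.pi * ∑ i, (x i - a i) ^ 2)) := by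
  unfold gs
  rw [Complex.norm_real, Real.norm_of_nonneg (by positivity)]

lemma fourier_gs (s : ℝ) (a ξ : Fin d → ℝ) :
    fourierT (gs s a) ξ = s * (Complex.exp (-(2 * (Real.pi : ℂ) * Complex.I * ∑ i, (a i : ℂ) * (ξ i : ℂ)))
      * Complex.exp (-((Real.pi * ∑ i, (ξ i) ^ 2 : ℝ) : ℂ))) := by
  have hpi : (Real.pi : ℂ) ≠ 0 := by exact_mod_cast Real.pi_ne_zero
  have key := GaussianFourier.integral_cexp_neg_sum_mul_add (ι := Fin d) (b := fun _ => (Real.pi : ℂ))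
    (fun _ => by simpa using Real.pi_pos)
    (fun i => 2 * (Real.pi : ℂ) * ((a i : ℂ) - Complex.I * (ξ i : ℂ)))
  have e : ∀ x : Fin d → ℝ,
      Complex.exp (-(2 * (Real.pi : ℂ) * Complex.I * ∑ i, (x i : ℂ) * (ξ i : ℂ))) * gs s a x
      = (s * Complex.exp (-∑ i, (Real.pi : ℂ) * (a i : ℂ) ^ 2)) *
        Complex.exp (-∑ i, (Real.pi : ℂ) * (x i : ℂ) ^ 2
          + ∑ i, 2 * (Real.pi : ℂ) * ((a i : ℂ) - Complex.I * (ξ i : ℂ)) * (x i : ℂ)) := by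
    intro x
    unfold gs
    push_cast
    rw [mul_left_comm (Complex.exp _), mul_assoc (s : ℂ), ← Complex.exp_add, ← Complex.exp_add]
    congr 2
    simp only [Finset.mul_sum, ← Finset.sum_neg_distrib, ← Finset.sum_add_distrib]
    refine Finset.sum_congr rfl fun i _ => ?_
    ring
  unfold fourierT
  simp_rw [e]
  rw [integral_const_mul, key]
  simp only [div_self hpi, Complex.one_cpow, one_mul]
  rw [← Complex.exp_sum, mul_assoc, ← Complex.exp_add, ← Complex.exp_add]
  congr 2
  push_cast
  simp only [Finset.mul_sum, ← Finset.sum_neg_distrib, ← Finset.sum_add_distrib]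
  refine Finset.sum_congr rfl fun i _ => ?_
  field_simp
  ring_nf
  simp only [Complex.I_sq]
  ring

lemma fourier_gs_norm (s : ℝ) (hs : 0 ≤ s) (a ξ : Fin d → ℝ) :
    ‖fourierT (gs s a) ξ‖ = s * Real.exp (-(Real.pi * ∑ i, (ξ i) ^ 2)) := by
  rw [fourier_gs, norm_mul, norm_mul, Complex.norm_real, Real.norm_of_nonneg hs,
    Complex.norm_exp, Complex.norm_exp]
  have : (-(2 * (Real.pi : ℂ) * Complex.I * ∑ i, (a i : ℂ) * (ξ i : ℂ))).re = 0 := by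
    have : (-(2 * (Real.pi : ℂ) * Complex.I * ∑ i, (a i : ℂ) * (ξ i : ℂ)))
      = ((-(2 * Real.pi * ∑ i, a i * ξ i) : ℝ) : ℂ) * Complex.I := by push_cast; ring
    rw [this, Complex.re_ofReal_mul]; simp
  rw [this, Real.exp_zero, one_mul, ← Complex.ofReal_neg, Complex.ofReal_re]

lemma fourier_gs_measurable (s : ℝ) (a : Fin d → ℝ) : Measurable (fourierT (gs s a)) := by
  have : fourierT (gs s a) = _ := funext (fourier_gs s a)
  rw [this]
  refine Continuous.measurable ?_
  fun_prop

lemma amalgam_one (p : ℝ) (ω : (Fin d → ℝ) → ℝ) (f : (Fin d → ℝ) → ℂ) :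
    amalgamNorm p 1 ω f = ∑' α : Fin d → ℤ,
      eLpNorm (fun x => ω x • f x) (ENNReal.ofReal p) (volume.restrict (cube α)) := by
  simp [amalgamNorm]

lemma amalgam_mono (p C : ℝ) (ω ω' : (Fin d → ℝ) → ℝ) (f : (Fin d → ℝ) → ℂ)
    (h0 : ∀ x, 0 ≤ ω x) (h0' : ∀ x, 0 ≤ ω' x) (h : ∀ x, ω x ≤ C * ω' x) :
    amalgamNorm p 1 ω f ≤ ENNReal.ofReal C * amalgamNorm p 1 ω' f := by
  rw [amalgam_one, amalgam_one, ← ENNReal.tsum_mul_left]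
  refine ENNReal.tsum_le_tsum fun α => ?_
  refine eLpNorm_le_mul_eLpNorm_of_ae_le_mul (Eventually.of_forall fun x => ?_) _
  rw [norm_smul, norm_smul, Real.norm_of_nonneg (h0 x), Real.norm_of_nonneg (h0' x), ← mul_assoc]
  exact mul_le_mul_of_nonneg_right (h x) (norm_nonneg _)

lemma cube_lower (p c : ℝ) (hp : 1 < p) (hc : 0 ≤ c) (F : (Fin d → ℝ) → ℂ) (α : Fin d → ℤ)
    (h : ∀ x ∈ cube α, c ≤ ‖F x‖) :
    ENNReal.ofReal c ≤ eLpNorm F (ENNReal.ofReal p) (volume.restrict (cube α)) := by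
  have hμ : (volume.restrict (cube α)) ≠ 0 := by
    intro h0
    have : (volume.restrict (cube α)) Set.univ = 1 := by simp [volume_cube]
    rw [h0] at this
    simp at this
  have h1 : eLpNorm (fun _ => c) (ENNReal.ofReal p) (volume.restrict (cube α))
      ≤ eLpNorm F (ENNReal.ofReal p) (volume.restrict (cube α)) := by
    refine eLpNorm_mono_ae ?_
    rw [ae_restrict_iff' (measurableSet_cube α)]
    refine Eventually.of_forall fun x hx => ?_
    rw [Real.norm_of_nonneg hc]
    exact h x hx
  rw [eLpNorm_const _ (by simp; linarith) hμ] at h1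
  simpa [volume_cube, Real.enorm_of_nonneg hc] using h1

end AInclAux

open AInclAux in
/-- if `ϑ₃ ≺ ϑ₁` and `ϑ₃/ϑ₁` does not tend to zero at infinity, then
`A^{p,1,q,r}_{ϑ₁,ϑ₂}(ℝ^d) ⊆ A^{p,1,q,r}_{ϑ₃,ϑ₂}(ℝ^d)` and the inclusion map is
never compact. -/
theorem A_inclusion_never_compact {d : ℕ} (p q r : ℝ) (hp : 1 < p) (hq : 1 < q) (hr : 1 < r)
    (ϑ₁ ϑ₂ ϑ₃ : (Fin d → ℝ) → ℝ)
    (h1 : IsBeurling ϑ₁) (h2 : IsBeurling ϑ₂) (h3 : IsBeurling ϑ₃)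
    (hprec : Prec ϑ₃ ϑ₁) (hnv : NotVanishingAtInfty (fun x => ϑ₃ x / ϑ₁ x)) :
    (∀ f : (Fin d → ℝ) → ℂ, MemA p q r ϑ₁ ϑ₂ f → MemA p q r ϑ₃ ϑ₂ f) ∧
    ∃ f : ℕ → (Fin d → ℝ) → ℂ,
      (∀ n, MemA p q r ϑ₁ ϑ₂ (f n)) ∧
      (∃ M : ℝ, ∀ n, ANorm p q r ϑ₁ ϑ₂ (f n) ≤ ENNReal.ofReal M) ∧
      ¬ ∃ (φ : ℕ → ℕ) (g : (Fin d → ℝ) → ℂ), StrictMono φ ∧ MemA p q r ϑ₃ ϑ₂ g ∧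
          Tendsto (fun k => ANorm p q r ϑ₃ ϑ₂ (fun x => f (φ k) x - g x)) atTop (nhds 0) := by
  obtain ⟨C, hC, hCb⟩ := hprec
  have p1 : ∀ x, 0 < ϑ₁ x := fun x => by linarith [h1.2.1 x]
  have p3 : ∀ x, 0 < ϑ₃ x := fun x => by linarith [h3.2.1 x]
  refine ⟨?_, ?_⟩
  · rintro f ⟨⟨hf, hfn⟩, hF⟩
    refine ⟨⟨hf, ?_⟩, hF⟩
    exact (amalgam_mono p C ϑ₃ ϑ₁ f (fun x => (p3 x).le) (fun x => (p1 x).le) hCb).trans_lt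
      (ENNReal.mul_lt_top ENNReal.ofReal_lt_top hfn)
  obtain ⟨δ, hδ, hδb⟩ := hnv
  choose a ha1 ha2 using fun n : ℕ => hδb (n + 1) (by positivity)
  obtain ⟨K₁, hK₁, hK₁b⟩ := beurling_gauss h1
  obtain ⟨K₂, hK₂, hK₂b⟩ := beurling_gauss h2
  obtain ⟨B, A, hB, hA, hBA⟩ := beurling_exp h3
  set s : ℕ → ℝ := fun n => (ϑ₁ (a n))⁻¹ with hs
  have hs0 : ∀ n, 0 < s n := fun n => inv_pos.mpr (p1 _)
  have hs1 : ∀ n, s n ≤ 1 := fun n => inv_le_one_of_one_le₀ (h1.2.1 _)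
  set f : ℕ → (Fin d → ℝ) → ℂ := fun n => gs (s n) (a n) with hf
  have bd1 : ∀ n x, ‖ϑ₁ x • f n x‖ ≤ K₁ * Real.exp (-∑ i, |x i - a n i|) := by
    intro n x
    rw [norm_smul, Real.norm_of_nonneg (p1 x).le, hf]
    simp only
    rw [gs_norm _ (hs0 n).le]
    have e1 : ϑ₁ x ≤ ϑ₁ (a n) * ϑ₁ (x - a n) := by
      have := h1.2.2 (a n) (x - a n)
      rwa [add_sub_cancel] at this
    have e2 : ϑ₁ x * s n ≤ ϑ₁ (x - a n) := by
      rw [hs]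
      simp only
      rw [← div_eq_mul_inv, div_le_iff₀ (p1 _)]
      linarith
    rw [← mul_assoc]
    refine (mul_le_mul_of_nonneg_right e2 (Real.exp_pos _).le).trans ?_
    simpa using hK₁b (x - a n)
  have bd3 : ∀ n x, ‖ϑ₃ x • f n x‖ ≤ (C * K₁) * Real.exp (-∑ i, |x i - a n i|) := by
    intro n x
    have := bd1 n x
    rw [norm_smul, Real.norm_of_nonneg (p1 x).le] at this
    rw [norm_smul, Real.norm_of_nonneg (p3 x).le, mul_assoc]
    refine (mul_le_mul_of_nonneg_right (hCb x) (norm_nonneg _)).trans ?_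
    rw [mul_assoc]
    exact mul_le_mul_of_nonneg_left this hC.le
  have bd2 : ∀ n x, ‖ϑ₂ x • fourierT (f n) x‖ ≤ K₂ * Real.exp (-∑ i, |x i - (0 : Fin d → ℝ) i|) := by
    intro n x
    have q2 : 0 < ϑ₂ x := by linarith [h2.2.1 x]
    rw [norm_smul, Real.norm_of_nonneg q2.le, hf]
    simp only
    rw [fourier_gs_norm _ (hs0 n).le]
    have := hK₂b x
    simp only [Pi.zero_apply, sub_zero]
    refine le_trans ?_ this
    refine mul_le_mul_of_nonneg_left ?_ q2.le
    exact mul_le_of_le_one_left (Real.exp_pos _).le (hs1 n)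
  have N1 : ∀ n, amalgamNorm p 1 ϑ₁ (f n) ≤ bd d 1 K₁ := fun n =>
    amalgam_bound p 1 one_pos _ _ (a n) K₁ hK₁ (bd1 n)
  have N2 : ∀ n, amalgamNorm q r ϑ₂ (fourierT (f n)) ≤ bd d r K₂ := fun n =>
    amalgam_bound q r (by linarith) _ _ 0 K₂ hK₂ (bd2 n)
  have T1 : bd d 1 K₁ < ⊤ := bd_lt_top 1 K₁ one_pos hK₁
  have T2 : bd d r K₂ < ⊤ := bd_lt_top r K₂ (by linarith) hK₂
  refine ⟨f, fun n => ⟨⟨gs_measurable _ _, (N1 n).trans_lt T1⟩,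
    fourier_gs_measurable _ _, (N2 n).trans_lt T2⟩, ⟨(bd d 1 K₁ + bd d r K₂).toReal, fun n => ?_⟩, ?_⟩
  · rw [ENNReal.ofReal_toReal (ENNReal.add_lt_top.mpr ⟨T1, T2⟩).ne]
    exact add_le_add (N1 n) (N2 n)
  rintro ⟨φ, g, hφ, ⟨⟨hgm, -⟩, -⟩, hlim⟩
  set N : ((Fin d → ℝ) → ℂ) → (Fin d → ℤ) → ℝ≥0∞ := fun h α =>
    eLpNorm (fun x => ϑ₃ x • h x) (ENNReal.ofReal p) (volume.restrict (cube α)) with hN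
  have hp1 : 1 ≤ ENNReal.ofReal p := by simpa using hp.le
  have sm : ∀ h : (Fin d → ℝ) → ℂ, Measurable h → ∀ α : Fin d → ℤ,
      AEStronglyMeasurable (fun x => ϑ₃ x • h x) (volume.restrict (cube α)) := fun h hh α =>
    (h3.1.smul hh).aestronglyMeasurable
  have hfm : ∀ n, Measurable (f n) := fun n => gs_measurable _ _
  have lim1 : Tendsto (fun k => amalgamNorm p 1 ϑ₃ (fun x => f (φ k) x - g x)) atTop (nhds 0) :=
    tendsto_of_tendsto_of_tendsto_of_le_of_le tendsto_const_nhds hlim (fun _ => bot_le)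
      (fun _ => le_self_add)
  have lim2 : ∀ α, Tendsto (fun k => N (fun x => f (φ k) x - g x) α) atTop (nhds 0) := fun α =>
    tendsto_of_tendsto_of_tendsto_of_le_of_le tendsto_const_nhds lim1 (fun _ => bot_le)
      (fun k => by simp only [amalgam_one]; exact ENNReal.le_tsum α)
  have lim3 : ∀ α, Tendsto (fun n => N (f n) α) atTop (nhds 0) := by
    intro α
    have hb : ∀ n, N (f n) α ≤ ENNReal.ofReal ((C * K₁) * Real.exp (2 * d) *
        Real.exp (-∑ i, |((α i - ⌊a n i⌋ : ℤ) : ℝ)|)) := fun n =>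
      cube_bound p ϑ₃ (f n) (a n) (C * K₁) (by positivity) (bd3 n) α
    have hS : Tendsto (fun n => ∑ i, |((α i - ⌊a n i⌋ : ℤ) : ℝ)|) atTop atTop := by
      have hl : ∀ n : ℕ, (n : ℝ) - (∑ i, |(α i : ℝ)|) ≤ ∑ i, |((α i - ⌊a n i⌋ : ℤ) : ℝ)| := by
        intro n
        have : ‖a n‖ ≤ ∑ i, |((α i - ⌊a n i⌋ : ℤ) : ℝ)| + ∑ i, |(α i : ℝ)| + 1 := by
          refine (pi_norm_le_iff_of_nonneg (by positivity)).mpr fun i => ?_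
          have u1 := Finset.single_le_sum (f := fun i => |((α i - ⌊a n i⌋ : ℤ) : ℝ)|)
            (fun i _ => abs_nonneg _) (Finset.mem_univ i)
          have u2 := Finset.single_le_sum (f := fun i => |(α i : ℝ)|)
            (fun i _ => abs_nonneg _) (Finset.mem_univ i)
          have u3 := Int.floor_le (a n i)
          have u4 := Int.lt_floor_add_one (a n i)
          have u5 := abs_le.mp u1
          have u6 := abs_le.mp u2
          push_cast at u5 ⊢
          rw [Real.norm_eq_abs, abs_le]
          constructor <;> linarith [u5.1, u5.2, u6.1, u6.2]
        linarith [ha1 n]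
      refine tendsto_atTop_mono hl ?_
      exact tendsto_atTop_add_const_right _ _ tendsto_natCast_atTop_atTop
    have hE := (Real.tendsto_exp_atBot.comp (tendsto_neg_atTop_atBot.comp hS)).const_mul
      ((C * K₁) * Real.exp (2 * d))
    have hE2 := ENNReal.tendsto_ofReal hE
    rw [mul_zero, ENNReal.ofReal_zero] at hE2
    exact tendsto_of_tendsto_of_tendsto_of_le_of_le tendsto_const_nhds hE2 (fun _ => bot_le) hb
  have hg0 : ∀ α, N g α = 0 := by
    intro α
    have hle : ∀ k, N g α ≤ N (f (φ k)) α + N (fun x => f (φ k) x - g x) α := by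
      intro k
      have := eLpNorm_sub_le (sm _ (hfm (φ k)) α) (sm _ ((hfm (φ k)).sub hgm) α) hp1
      refine le_trans (le_of_eq ?_) this
      simp only [hN]
      congr 1
      ext x
      simp [smul_sub]
    have := ((lim3 α).comp hφ.tendsto_atTop).add (lim2 α)
    rw [add_zero] at this
    exact le_antisymm (ge_of_tendsto' this hle) bot_le
  -- lower bound
  set c : ℝ := δ * Real.exp (-(Real.pi * d)) / (B * Real.exp (A * d)) with hc
  have hc0 : 0 < c := by positivity
  have low : ∀ n, ENNReal.ofReal c ≤ N (f n) (fun i => ⌊a n i⌋) := by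
    intro n
    refine cube_lower p c hp hc0.le _ _ fun x hx => ?_
    rw [norm_smul, Real.norm_of_nonneg (p3 x).le, hf]
    simp only
    rw [gs_norm _ (hs0 n).le]
    have hxi : ∀ i, |x i - a n i| ≤ 1 := by
      intro i
      have hx1 := hx i (Set.mem_univ i)
      have u3 := Int.floor_le (a n i)
      have u4 := Int.lt_floor_add_one (a n i)
      rw [abs_le]
      constructor <;> linarith [hx1.1, hx1.2]
    have e1 : ϑ₃ (a n) ≤ ϑ₃ x * (B * Real.exp (A * d)) := by
      have := h3.2.2 x (a n - x)
      rw [add_sub_cancel] at this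
      refine this.trans (mul_le_mul_of_nonneg_left ((hBA _).trans ?_) (p3 x).le)
      refine mul_le_mul_of_nonneg_left (Real.exp_le_exp.mpr ?_) hB.le
      refine mul_le_mul_of_nonneg_left ?_ hA
      calc ∑ i, |(a n - x) i| ≤ ∑ i : Fin d, (1 : ℝ) := Finset.sum_le_sum fun i _ => by
            rw [Pi.sub_apply, abs_sub_comm]; exact hxi i
        _ = d := by simp
    have e2 : Real.exp (-(Real.pi * d)) ≤ Real.exp (-(Real.pi * ∑ i, (x i - a n i) ^ 2)) := by
      apply Real.exp_le_exp.mpr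
      have : ∑ i, (x i - a n i) ^ 2 ≤ d := by
        calc ∑ i, (x i - a n i) ^ 2 ≤ ∑ i : Fin d, (1 : ℝ) := Finset.sum_le_sum fun i _ => by
              exact (sq_le_one_iff_abs_le_one _).mpr (hxi i)
          _ = d := by simp
      have := mul_le_mul_of_nonneg_left this Real.pi_pos.le
      linarith
    have e3 : δ ≤ ϑ₃ x * (B * Real.exp (A * d)) * s n := by
      refine (ha2 n).trans ?_
      simp only [div_eq_mul_inv]
      exact mul_le_mul_of_nonneg_right e1 (hs0 n).le
    rw [hc, div_le_iff₀ (by positivity)]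
    calc δ * Real.exp (-(Real.pi * d)) ≤ (ϑ₃ x * (B * Real.exp (A * d)) * s n) *
          Real.exp (-(Real.pi * ∑ i, (x i - a n i) ^ 2)) :=
          mul_le_mul e3 e2 (Real.exp_pos _).le (hδ.le.trans e3)
      _ = _ := by ring
  have fin : ∀ k, ENNReal.ofReal c ≤ amalgamNorm p 1 ϑ₃ (fun x => f (φ k) x - g x) := by
    intro k
    refine (low (φ k)).trans ?_
    set α : Fin d → ℤ := fun i => ⌊a (φ k) i⌋
    have h5 : N (f (φ k)) α ≤ N (fun x => f (φ k) x - g x) α + N g α := by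
      have := eLpNorm_add_le (sm _ ((hfm (φ k)).sub hgm) α) (sm _ hgm α) hp1
      refine le_trans (le_of_eq ?_) this
      simp only [hN]
      congr 1
      ext x
      simp [smul_sub]
    rw [hg0, add_zero] at h5
    refine h5.trans ?_
    rw [amalgam_one]
    exact ENNReal.le_tsum α
  have := ge_of_tendsto' lim1 fin
  simp at this
  linarith
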